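/- Let H be the Bethe–Salpeter matrix, let q₁ ∈ ℂ^{2n} and k ≥ 1 with n ≥ k+1. Suppose that K_{2k+2}(H, q₁) has full column rank, that no Π⁻-leading principal minor of K_{2k+2}(H, q₁)ᴴ·Γ₀·K_{2k+2}(H, q₁) vanishes, and let K_{2k+2}(H, q₁) = Q_{2k+2}·R_{2k+2} be a skinny ΓQR factorization with respect to Γ₀; write Q_{2k+2} = [U_k, u_{k+1}, Π·conj(U_k), Π·conj(u_{k+1})], Q_{2k+2}ᴴ·Γ₀·Q_{2k+2} = Γ_{2k+2} = diag(D_k, δ_{k+1}, −D_k, −δ_{k+1}) ∈ 𝔾_{2k+2}, Q_{2k} = [U_k, Π·conj(U_k)] and Γ_{2k} = diag(D_k, −D_k). Then there exist an unreduced tridiagonal matrix T₁₁ ∈ ℂ^{k×k} (tridiagonal with all sub- and super-diagonal entries nonzero), a diagonal matrix T₂₁ ∈ ℂ^{k×k}, and t ∈ ℂ such that, with T̃_{2k} ∈ ℂ^{(2k+2)×2k} the matrix in ΓLan form with blocks T₁₁, T₂₁, t: (i) H·Q_{2k} = Q_{2k+2}·T̃_{2k}; (ii) Q_{2k}ᴴ·Γ₀·H·Q_{2k}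 = Γ_{2k}·[[T₁₁, −conj(T₂₁)],[T₂₁, −conj(T₁₁)]]; and (iii) D_k·T₁₁ is Hermitian, i.e. (D_k·T₁₁)ᴴ = D_k·T₁₁. -/

import Mathlib

/-! Let `W = Γ Qᴴ Γ₀ H Q` be the compression of `H` to the Π-Krylov space. Put the columns in the
interleaved order `x₁, Π·conj(x₁), x₂, Π·conj(x₂), …`. Then the Π⁺-upper triangular factor `R`
becomes upper triangular, and by `H·Π = −Π·conj(H)` multiplication by `H` moves the Krylov columns
by the signed shift `S = diag(N, −N)`, of lower bandwidth two. Up to the last pair of columns,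
where the Krylov matrix ends, `W` therefore agrees with `R S R⁻¹`, again of lower bandwidth two
and with nonzero entries on the outermost diagonal. Separating the interleaved halves, `W₁₁` is
unreduced upper Hessenberg and `W₂₁` is upper triangular in these columns. Since `Γ W = Qᴴ Γ₀ H Q`
is Hermitian and `W` is a Π⁻-matrix, both zero patterns are symmetric, so `W₁₁` is tridiagonal and
`W₂₁` is diagonal. -/

open Matrix Complex

noncomputable section

/-- The matrix Π = [[0, I],[I, 0]]. -/
def PiMat (n : ℕ) : Matrix (Fin n ⊕ Fin n) (Fin n ⊕ Fin n) ℂ :=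
  Matrix.fromBlocks 0 1 1 0

/-- The matrix Γ₀ = diag(I, −I). -/
def GammaZero (n : ℕ) : Matrix (Fin n ⊕ Fin n) (Fin n ⊕ Fin n) ℂ :=
  Matrix.fromBlocks 1 0 0 (-1)

/-- Entrywise complex conjugate of a matrix. -/
def mconj {α β : Type*} (M : Matrix α β ℂ) : Matrix α β ℂ :=
  M.map (starRingEnd ℂ)

/-- The Bethe–Salpeter matrix H = [[A, B],[−conj B, −conj A]]. -/
def BSmat {n : ℕ} (A B : Matrix (Fin n) (Fin n) ℂ) :
    Matrix (Fin n ⊕ Fin n) (Fin n ⊕ Fin n) ℂ :=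
  Matrix.fromBlocks A B (-(mconj B)) (-(mconj A))

/-- Membership in 𝔾_{2k}: Γ = diag(J, −J) with J diagonal with ±1 entries. -/
def IsGammaMat {k : ℕ} (Γ : Matrix (Fin k ⊕ Fin k) (Fin k ⊕ Fin k) ℂ) : Prop :=
  ∃ d : Fin k → ℂ, (∀ i, d i = 1 ∨ d i = -1) ∧
    Γ = Matrix.fromBlocks (Matrix.diagonal d) 0 0 (-(Matrix.diagonal d))

/-- G is a Π^ε-matrix (ε = 1 : Π⁺, ε = −1 : Π⁻): G·Π_{2m} = ε·Π_{2n}·conj(G). -/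
def IsPiMat {n m : ℕ} (ε : ℂ) (G : Matrix (Fin n ⊕ Fin n) (Fin m ⊕ Fin m) ℂ) : Prop :=
  G * PiMat m = ε • (PiMat n * mconj G)

/-- R is Π^ε-upper triangular. -/
def IsPiUpperTri {n m : ℕ} (ε : ℂ) (R : Matrix (Fin n ⊕ Fin n) (Fin m ⊕ Fin m) ℂ) : Prop :=
  ∃ R₁ R₂ : Matrix (Fin n) (Fin m) ℂ,
    R = Matrix.fromBlocks R₁ R₂ (ε • mconj R₂) (ε • mconj R₁) ∧
    (∀ (i : Fin n) (j : Fin m), (j : ℕ) < (i : ℕ) → R₁ i j = 0) ∧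
    (∀ (i : Fin n) (j : Fin m), (j : ℕ) ≤ (i : ℕ) → R₂ i j = 0)

/-- The i-th Π⁻-leading principal minor of a 2m×2m matrix. -/
def piLeadingMinor {m : ℕ} (M : Matrix (Fin m ⊕ Fin m) (Fin m ⊕ Fin m) ℂ)
    (i : ℕ) (h : i ≤ m) : ℂ :=
  (Matrix.fromBlocks
    ((M.toBlocks₁₁).submatrix (Fin.castLE h) (Fin.castLE h))
    ((M.toBlocks₁₂).submatrix (Fin.castLE h) (Fin.castLE h))
    ((M.toBlocks₂₁).submatrix (Fin.castLE h) (Fin.castLE h))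
    ((M.toBlocks₂₂).submatrix (Fin.castLE h) (Fin.castLE h))).det

/-- The k-th order Π-Krylov matrix
K_{2k}(H, q) = [q, Hq, …, H^{k−1}q, Π·conj(q), …, Π·conj(H)^{k−1}·conj(q)]. -/
def KrylovMat {n : ℕ} (H : Matrix (Fin n ⊕ Fin n) (Fin n ⊕ Fin n) ℂ)
    (q : (Fin n ⊕ Fin n) → ℂ) (k : ℕ) :
    Matrix (Fin n ⊕ Fin n) (Fin k ⊕ Fin k) ℂ :=
  Matrix.of fun i j =>
    Sum.elim (fun l : Fin k => (H ^ (l : ℕ)).mulVec q i)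
      (fun l : Fin k => (PiMat n).mulVec (((mconj H) ^ (l : ℕ)).mulVec (star q)) i) j

/-- The Π⁺-matrix [q₁, …, q_m, Π·conj(q₁), …, Π·conj(q_m)] built from the columns q. -/
def QfromCols {n m : ℕ} (q : Fin m → (Fin n ⊕ Fin n) → ℂ) :
    Matrix (Fin n ⊕ Fin n) (Fin m ⊕ Fin m) ℂ :=
  Matrix.of fun i j =>
    Sum.elim (fun l : Fin m => q l i)
      (fun l : Fin m => (PiMat n).mulVec (star (q l)) i) j

/-- The (2k+2)×2k matrix in ΓLan form with blocks T₁₁ (tridiagonal), T₂₁ (diagonal)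
and scalar t: rows 1..k are [T₁₁, −conj T₂₁], row k+1 is [t·e_kᵀ, 0], rows k+2..2k+1
are [T₂₁, −conj T₁₁] and row 2k+2 is [0, −conj(t)·e_kᵀ]. -/
def gammaLanForm (k : ℕ) (T11 T21 : Matrix (Fin k) (Fin k) ℂ) (t : ℂ) :
    Matrix (Fin (k + 1) ⊕ Fin (k + 1)) (Fin k ⊕ Fin k) ℂ :=
  Matrix.of fun i j =>
    match i with
    | Sum.inl i' =>
        if h : (i' : ℕ) < k then
          Sum.elim (fun j' => T11 ⟨i', h⟩ j')
            (fun j' => -(starRingEnd ℂ (T21 ⟨i', h⟩ j'))) j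
        else
          Sum.elim (fun j' : Fin k => if (j' : ℕ) + 1 = k then t else 0)
            (fun _ => 0) j
    | Sum.inr i' =>
        if h : (i' : ℕ) < k then
          Sum.elim (fun j' => T21 ⟨i', h⟩ j')
            (fun j' => -(starRingEnd ℂ (T11 ⟨i', h⟩ j'))) j
        else
          Sum.elim (fun _ => 0)
            (fun j' : Fin k => if (j' : ℕ) + 1 = k then -(starRingEnd ℂ t) else 0) j

/-- T₁₁ is tridiagonal. -/
def IsTridiagonal {k : ℕ} (T : Matrix (Fin k) (Fin k) ℂ) : Prop :=
  ∀ i j : Fin k, ((i : ℕ) + 1 < (j : ℕ) ∨ (j : ℕ) + 1 < (i : ℕ)) → T i j = 0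

/-- A skinny ΓQR factorization (for Π⁺-matrices) of G with respect to Γ. -/
def IsSkinnyGammaQR {n m : ℕ} (Γ : Matrix (Fin n ⊕ Fin n) (Fin n ⊕ Fin n) ℂ)
    (G Q : Matrix (Fin n ⊕ Fin n) (Fin m ⊕ Fin m) ℂ)
    (R : Matrix (Fin m ⊕ Fin m) (Fin m ⊕ Fin m) ℂ) : Prop :=
  G = Q * R ∧ IsPiMat 1 Q ∧ IsGammaMat (Qᴴ * Γ * Q) ∧ IsPiUpperTri 1 R

/-- `X` has lower bandwidth at most `d` when its rows and columns are put in the order given by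
`b : m → ℕ`. For `d = 0` this is upper triangularity, for `d = 1` the upper Hessenberg form. -/
def HasLowerBandwidth {m F : Type*} [Zero F] (b : m → ℕ) (d : ℕ) (X : Matrix m m F) : Prop :=
  ∀ ⦃i j⦄, b j + d < b i → X i j = 0

section Bandwidth

variable {m F : Type*} {b : m → ℕ} {d e : ℕ}

lemma hasLowerBandwidth_zero_iff [Zero F] {X : Matrix m m F} :
    HasLowerBandwidth b 0 X ↔ X.BlockTriangular b :=
  Iff.rfl

section Semiring

variable [Fintype m] [NonUnitalNonAssocSemiring F] {X Y : Matrix m m F}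

lemma HasLowerBandwidth.mul (hX : HasLowerBandwidth b d X) (hY : HasLowerBandwidth b e Y) :
    HasLowerBandwidth b (d + e) (X * Y) := by
  intro i j hij
  rw [mul_apply]
  refine Finset.sum_eq_zero fun k _ => ?_
  rcases lt_or_ge (b k + d) (b i) with hk | hk
  · rw [hX hk, zero_mul]
  · rw [hY (by omega), mul_zero]

lemma HasLowerBandwidth.mul_apply_of_extremal (hb : Function.Injective b)
    (hX : HasLowerBandwidth b d X) (hY : HasLowerBandwidth b e Y) {i j k : m}
    (hik : b i = b k + d) (hkj : b k = b j + e) : (X * Y) i j = X i k * Y k j := by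
  rw [mul_apply]
  refine Finset.sum_eq_single k (fun l _ hlk => ?_) (by simp)
  rcases lt_or_gt_of_ne (hb.ne hlk) with hl | hl
  · rw [hX (by omega), zero_mul]
  · rw [hY (by omega), mul_zero]

lemma HasLowerBandwidth.mul_submatrix_congr {ι m' : Type*} {V W : Matrix ι m F} {U : Matrix m m F}
    {f : m' → m} (hU : HasLowerBandwidth b 0 U) (hf : ∀ a p, b a ≤ b (f p) → a ∈ Set.range f)
    (hVW : V.submatrix id f = W.submatrix id f) :
    (V * U).submatrix id f = (W * U).submatrix id f := by
  ext i p
  simp only [submatrix_apply, id_eq, mul_apply]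
  refine Finset.sum_congr rfl fun a _ => ?_
  rcases le_or_gt (b a) (b (f p)) with hap | hap
  · obtain ⟨p', rfl⟩ := hf a p hap
    rw [show V i (f p') = W i (f p') from congrFun₂ hVW i p']
  · rw [hU hap, mul_zero, mul_zero]

end Semiring

variable [Fintype m] [DecidableEq m] [CommRing F] {R S : Matrix m m F}

lemma HasLowerBandwidth.inv (hR : HasLowerBandwidth b 0 R) (hRu : IsUnit R) :
    HasLowerBandwidth b 0 R⁻¹ := by
  have := hRu.invertible
  exact hasLowerBandwidth_zero_iff.2 (blockTriangular_inv_of_blockTriangular hR)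

lemma HasLowerBandwidth.apply_mul_inv_apply (hb : Function.Injective b)
    (hR : HasLowerBandwidth b 0 R) (hRu : IsUnit R) (i : m) : R i i * R⁻¹ i i = 1 := by
  rw [← hR.mul_apply_of_extremal hb (hR.inv hRu) rfl rfl,
    mul_nonsing_inv R ((isUnit_iff_isUnit_det R).1 hRu), one_apply_eq]

lemma HasLowerBandwidth.conj_upperTriangular (hS : HasLowerBandwidth b d S)
    (hR : HasLowerBandwidth b 0 R) (hRu : IsUnit R) : HasLowerBandwidth b d (R * S * R⁻¹) := by
  simpa only [zero_add, add_zero] using (hR.mul hS).mul (hR.inv hRu)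

lemma HasLowerBandwidth.conj_upperTriangular_apply_ne_zero [IsDomain F]
    (hb : Function.Injective b) (hS : HasLowerBandwidth b d S) (hR : HasLowerBandwidth b 0 R)
    (hRu : IsUnit R) {i j : m} (hij : b i = b j + d) (hSij : S i j ≠ 0) :
    (R * S * R⁻¹) i j ≠ 0 := by
  have hdiag := hR.apply_mul_inv_apply hb hRu
  have hRS : HasLowerBandwidth b d (R * S) := by simpa only [zero_add] using hR.mul hS
  rw [hRS.mul_apply_of_extremal hb (hR.inv hRu) hij rfl, hR.mul_apply_of_extremal hb hS rfl hij]
  exact mul_ne_zero (mul_ne_zero (left_ne_zero_of_mul_eq_one (hdiag i)) hSij)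
    (right_ne_zero_of_mul_eq_one (hdiag j))

lemma HasLowerBandwidth.mul_submatrix_eq_mul_conj_submatrix {ι m' : Type*} [Fintype ι]
    {f : m' → m} {H : Matrix ι ι F} {Q : Matrix ι m F} (hR : HasLowerBandwidth b 0 R)
    (hRu : IsUnit R) (hf : ∀ a p, b a ≤ b (f p) → a ∈ Set.range f)
    (hK : (H * (Q * R)).submatrix id f = (Q * R * S).submatrix id f) :
    H * Q.submatrix id f = Q * (R * S * R⁻¹).submatrix id f := by
  have hRR : R * R⁻¹ = 1 := mul_nonsing_inv R ((isUnit_iff_isUnit_det R).1 hRu)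
  calc H * Q.submatrix id f = (H * (Q * R) * R⁻¹).submatrix id f := by
        rw [Matrix.mul_assoc, Matrix.mul_assoc, hRR, Matrix.mul_one]; rfl
    _ = (Q * R * S * R⁻¹).submatrix id f := (hR.inv hRu).mul_submatrix_congr hf hK
    _ = Q * (R * S * R⁻¹).submatrix id f := by simp only [Matrix.mul_assoc]; rfl

end Bandwidth

lemma isUnit_of_card_le_rank_mul {ι m F : Type*} [Fintype m] [DecidableEq m] [Field F]
    {Q : Matrix ι m F} {R : Matrix m m F} (h : Fintype.card m ≤ (Q * R).rank) : IsUnit R := by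
  have hrank : R.rank = Module.finrank F (m → F) := by
    rw [Module.finrank_pi]
    exact le_antisymm (rank_le_card_width R) (h.trans (rank_mul_le_right Q R))
  exact mulVec_surjective_iff_isUnit.1
    (LinearMap.range_eq_top.1 (Submodule.eq_top_of_finrank_eq hrank))

lemma apply_eq_zero_comm_of_isHermitian_diagonal_mul {m F : Type*} [Fintype m] [DecidableEq m]
    [NonUnitalNonAssocSemiring F] [NoZeroDivisors F] [StarAddMonoid F] {γ : m → F}
    (hγ : ∀ i, γ i ≠ 0) {W : Matrix m m F} (hW : (diagonal γ * W).IsHermitian) {i j : m} :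
    W i j = 0 ↔ W j i = 0 := by
  have hij : star (γ j * W j i) = γ i * W i j := by
    simpa only [diagonal_mul] using hW.apply i j
  rw [← mul_eq_zero_iff_left (hγ i), ← hij, star_eq_zero, mul_eq_zero_iff_left (hγ j)]

section PiMatrix

variable {n m l : ℕ}

lemma mconj_mul {α β γ : Type*} [Fintype β] (M : Matrix α β ℂ) (N : Matrix β γ ℂ) :
    mconj (M * N) = mconj M * mconj N :=
  Matrix.map_mul

lemma isPiMat_iff {ε : ℂ} {G : Matrix (Fin n ⊕ Fin n) (Fin m ⊕ Fin m) ℂ} :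
    IsPiMat ε G ↔ ∀ i j, G i.swap j.swap = ε * star (G i j) := by
  have hleft (i j) : (G * PiMat m) i j = G i j.swap := by
    cases j <;> simp [PiMat, mul_apply, one_apply]
  have hright (i j) : (ε • (PiMat n * mconj G)) i j = ε * star (G i.swap j) := by
    cases i <;> simp [PiMat, mul_apply, one_apply, mconj]
  rw [IsPiMat, ← Matrix.ext_iff]
  simp only [hleft, hright]
  exact ⟨fun h i j => by simpa using h i.swap j, fun h i j => by simpa using h i.swap j⟩

lemma IsPiMat.mul {ε η : ℂ} {G : Matrix (Fin n ⊕ Fin n) (Fin m ⊕ Fin m) ℂ}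
    {G' : Matrix (Fin m ⊕ Fin m) (Fin l ⊕ Fin l) ℂ} (hG : IsPiMat ε G) (hG' : IsPiMat η G') :
    IsPiMat (ε * η) (G * G') := by
  unfold IsPiMat at *
  rw [Matrix.mul_assoc, hG', Matrix.mul_smul, ← Matrix.mul_assoc, hG, Matrix.smul_mul, smul_smul,
    Matrix.mul_assoc, mconj_mul, mul_comm η]

lemma IsPiMat.conjTranspose {ε : ℂ} {G : Matrix (Fin n ⊕ Fin n) (Fin m ⊕ Fin m) ℂ}
    (hG : IsPiMat ε G) : IsPiMat (star ε) Gᴴ := by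
  rw [isPiMat_iff] at *
  intro i j
  rw [conjTranspose_apply, conjTranspose_apply, hG, star_mul']

lemma isPiMat_fromBlocks {ε : ℂ} (hε : ε * star ε = 1) (M₁ M₂ : Matrix (Fin n) (Fin m) ℂ) :
    IsPiMat ε (fromBlocks M₁ M₂ (ε • mconj M₂) (ε • mconj M₁)) := by
  have hconj (z : ℂ) : ε * (star ε * z) = z := by rw [← mul_assoc, hε, one_mul]
  rw [isPiMat_iff]
  rintro (i | i) (j | j) <;>
    simp only [fromBlocks_apply₁₁, fromBlocks_apply₁₂, fromBlocks_apply₂₁, fromBlocks_apply₂₂,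
      Sum.swap_inl, Sum.swap_inr, mconj, Matrix.smul_apply, map_apply, smul_eq_mul, star_mul',
      starRingEnd_apply, star_star, hconj]

lemma isPiMat_BSmat (A B : Matrix (Fin n) (Fin n) ℂ) : IsPiMat (-1) (BSmat A B) := by
  simpa [BSmat] using isPiMat_fromBlocks (ε := -1) (by simp) A B

lemma isHermitian_gammaZero_mul_BSmat {A B : Matrix (Fin n) (Fin n) ℂ} (hA : Aᴴ = A)
    (hB : Bᵀ = B) : (GammaZero n * BSmat A B).IsHermitian := by
  have hA' : (mconj A).IsHermitian := IsHermitian.map hA _ fun _ => rfl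
  have hB' : Bᴴ = mconj B := congrArg mconj hB
  simpa [GammaZero, BSmat, fromBlocks_multiply] using IsHermitian.fromBlocks hA hB' hA'

/-- The matrix `diag(δ, −δ)`; the elements of 𝔾_{2m} are those with `δ = ±1` entrywise. -/
def gammaMat (δ : Fin m → ℂ) : Matrix (Fin m ⊕ Fin m) (Fin m ⊕ Fin m) ℂ :=
  fromBlocks (diagonal δ) 0 0 (-(diagonal δ))

lemma gammaMat_eq_diagonal (δ : Fin m → ℂ) : gammaMat δ = diagonal (Sum.elim δ (-δ)) := by
  rw [gammaMat, diagonal_neg, fromBlocks_diagonal]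
  rfl

lemma isPiMat_gammaMat {δ : Fin m → ℂ} (hδ : star δ = δ) : IsPiMat (-1) (gammaMat δ) := by
  have hD : mconj (diagonal δ) = diagonal δ := by
    conv_rhs => rw [← hδ]
    exact diagonal_map (map_zero _)
  have h := isPiMat_fromBlocks (ε := -1) (by simp) (diagonal δ) (0 : Matrix (Fin m) (Fin m) ℂ)
  rw [hD] at h
  simpa [gammaMat, mconj] using h

lemma gammaZero_eq_gammaMat (n : ℕ) : GammaZero n = gammaMat 1 := by
  simp [GammaZero, gammaMat]

lemma gammaMat_mul_self {δ : Fin m → ℂ} (hδ : δ * δ = 1) : gammaMat δ * gammaMat δ = 1 := by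
  have hD : diagonal δ * diagonal δ = 1 := by
    rw [diagonal_mul_diagonal, ← diagonal_one]
    exact congrArg diagonal hδ
  rw [gammaMat, fromBlocks_multiply]
  simp only [hD, mul_zero, zero_mul, add_zero, zero_add, neg_mul_neg, fromBlocks_one]

end PiMatrix

section GammaCompression

variable {n m : ℕ} {δ : Fin m → ℂ} {H : Matrix (Fin n ⊕ Fin n) (Fin n ⊕ Fin n) ℂ}
  {Q : Matrix (Fin n ⊕ Fin n) (Fin m ⊕ Fin m) ℂ}

/-- The matrix `Γ Qᴴ Γ₀ H Q` with `Γ = diag(δ, −δ)`: it represents the compression of `H` to the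
column space of `Q` in the basis of the columns of `Q`, if these are Γ₀-orthonormal with signs
`Γ`. -/
def gammaCompression (δ : Fin m → ℂ) (H : Matrix (Fin n ⊕ Fin n) (Fin n ⊕ Fin n) ℂ)
    (Q : Matrix (Fin n ⊕ Fin n) (Fin m ⊕ Fin m) ℂ) : Matrix (Fin m ⊕ Fin m) (Fin m ⊕ Fin m) ℂ :=
  gammaMat δ * (Qᴴ * (GammaZero n * H) * Q)

lemma gammaMat_mul_gammaCompression (hδ : δ * δ = 1) :
    gammaMat δ * gammaCompression δ H Q = Qᴴ * (GammaZero n * H) * Q := by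
  rw [gammaCompression, ← Matrix.mul_assoc, gammaMat_mul_self hδ, Matrix.one_mul]

lemma isPiMat_gammaCompression (hδ : star δ = δ) (hH : IsPiMat (-1) H) (hQ : IsPiMat 1 Q) :
    IsPiMat (-1) (gammaCompression δ H Q) := by
  have hΓ₀ : IsPiMat (-1) (GammaZero n) := by
    rw [gammaZero_eq_gammaMat]
    exact isPiMat_gammaMat (star_one _)
  simpa [gammaCompression] using
    (isPiMat_gammaMat hδ).mul ((hQ.conjTranspose.mul (hΓ₀.mul hH)).mul hQ)

lemma isHermitian_gammaMat_mul_gammaCompression (hδ : δ * δ = 1)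
    (hH : (GammaZero n * H).IsHermitian) : (gammaMat δ * gammaCompression δ H Q).IsHermitian := by
  rw [gammaMat_mul_gammaCompression hδ]
  exact isHermitian_conjTranspose_mul_mul Q hH

lemma gammaCompression_apply_eq_zero_comm (hδ : δ * δ = 1) (hH : (GammaZero n * H).IsHermitian)
    (i j : Fin m ⊕ Fin m) : gammaCompression δ H Q i j = 0 ↔ gammaCompression δ H Q j i = 0 := by
  have hδ₀ (i) : δ i ≠ 0 := left_ne_zero_of_mul_eq_one (congrFun hδ i)
  refine apply_eq_zero_comm_of_isHermitian_diagonal_mul (γ := Sum.elim δ (-δ)) ?_ ?_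
  · simp [hδ₀]
  · rw [← gammaMat_eq_diagonal]
    exact isHermitian_gammaMat_mul_gammaCompression hδ hH

lemma gammaCompression_inr_inl_eq_zero_comm (hδ : δ * δ = 1) (hδs : star δ = δ)
    (hH : IsPiMat (-1) H) (hΓH : (GammaZero n * H).IsHermitian) (hQ : IsPiMat 1 Q) (i j : Fin m) :
    gammaCompression δ H Q (.inr i) (.inl j) = 0 ↔
      gammaCompression δ H Q (.inr j) (.inl i) = 0 := by
  have hswap := isPiMat_iff.1 (isPiMat_gammaCompression hδs hH hQ) (.inl i) (.inr j)
  simp only [Sum.swap_inl, Sum.swap_inr] at hswap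
  rw [hswap, gammaCompression_apply_eq_zero_comm hδ hΓH (.inr j)]
  simp

lemma gammaCompression_submatrix_eq {κ : Type*} {f : κ → Fin m ⊕ Fin m}
    {C : Matrix (Fin m ⊕ Fin m) κ ℂ} (hδ : δ * δ = 1)
    (hQ : Qᴴ * GammaZero n * Q = gammaMat δ) (hHQ : H * Q.submatrix id f = Q * C) :
    (gammaCompression δ H Q).submatrix id f = C :=
  calc (gammaCompression δ H Q).submatrix id f
      = gammaMat δ * (Qᴴ * GammaZero n * (H * Q.submatrix id f)) := by
        simp only [gammaCompression, Matrix.mul_assoc]; rfl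
    _ = gammaMat δ * (Qᴴ * GammaZero n * Q) * C := by
        rw [hHQ]; simp only [Matrix.mul_assoc]
    _ = C := by rw [hQ, gammaMat_mul_self hδ, Matrix.one_mul]

lemma gammaMat_mul_submatrix {l : ℕ} {κ ν : Type*} (δ : Fin m → ℂ) (e : Fin l → Fin m)
    (f : ν → κ) (X : Matrix (Fin m ⊕ Fin m) κ ℂ) :
    (gammaMat δ * X).submatrix (Sum.map e e) f =
      gammaMat (δ ∘ e) * X.submatrix (Sum.map e e) f := by
  ext (i | i) j <;> simp [gammaMat_eq_diagonal]

lemma conjTranspose_submatrix_mul_gammaZero_mul {l : ℕ} (hδ : δ * δ = 1) (e : Fin l → Fin m) :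
    (Q.submatrix id (Sum.map e e))ᴴ * GammaZero n * H * Q.submatrix id (Sum.map e e) =
      gammaMat (δ ∘ e) * (gammaCompression δ H Q).submatrix (Sum.map e e) (Sum.map e e) :=
  calc (Q.submatrix id (Sum.map e e))ᴴ * GammaZero n * H * Q.submatrix id (Sum.map e e)
      = (gammaMat δ * gammaCompression δ H Q).submatrix (Sum.map e e) (Sum.map e e) := by
        rw [gammaMat_mul_gammaCompression hδ, ← Matrix.mul_assoc]; rfl
    _ = _ := gammaMat_mul_submatrix δ e (Sum.map e e) (gammaCompression δ H Q)

lemma isHermitian_diagonal_mul_toBlocks₁₁_gammaCompression {l : ℕ} (hδ : δ * δ = 1)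
    (hH : (GammaZero n * H).IsHermitian) (e : Fin l → Fin m) :
    (diagonal (δ ∘ e) * (gammaCompression δ H Q).toBlocks₁₁.submatrix e e).IsHermitian := by
  have hsub : diagonal (δ ∘ e) * (gammaCompression δ H Q).toBlocks₁₁.submatrix e e =
      (gammaMat δ * gammaCompression δ H Q).submatrix (Sum.inl ∘ e) (Sum.inl ∘ e) := by
    ext i j
    simp [gammaMat_eq_diagonal, toBlocks₁₁]
  rw [hsub]
  exact (isHermitian_gammaMat_mul_gammaCompression hδ hH).submatrix _

end GammaCompression

section Krylov

/-- The position of a column of a `2m`-column Π⁺-matrix when its halves are interleaved as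
`x₁, Π·conj(x₁), x₂, Π·conj(x₂), …`. -/
def interleave {m : ℕ} : Fin m ⊕ Fin m → ℕ :=
  Sum.elim (fun i => 2 * i) (fun i => 2 * i + 1)

lemma interleave_injective {m : ℕ} : Function.Injective (interleave (m := m)) := by
  rintro (i | i) (j | j) h <;> simp only [interleave, Sum.elim_inl, Sum.elim_inr] at h <;>
    first | omega | exact congrArg _ (Fin.ext (by omega))

lemma mem_range_of_interleave_le {k : ℕ} (a : Fin (k + 1) ⊕ Fin (k + 1)) (p : Fin k ⊕ Fin k)
    (h : interleave a ≤ interleave (Sum.map Fin.castSucc Fin.castSucc p)) :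
    a ∈ Set.range (Sum.map Fin.castSucc Fin.castSucc : Fin k ⊕ Fin k → _) := by
  rcases a with a | a <;> rcases p with p | p <;>
    simp only [interleave, Sum.map_inl, Sum.map_inr, Sum.elim_inl, Sum.elim_inr,
      Fin.val_castSucc] at h
  · exact ⟨.inl ⟨a, by omega⟩, rfl⟩
  · exact ⟨.inl ⟨a, by omega⟩, rfl⟩
  · exact ⟨.inr ⟨a, by omega⟩, rfl⟩
  · exact ⟨.inr ⟨a, by omega⟩, rfl⟩

lemma IsPiUpperTri.hasLowerBandwidth {m : ℕ} {ε : ℂ}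
    {R : Matrix (Fin m ⊕ Fin m) (Fin m ⊕ Fin m) ℂ} (hR : IsPiUpperTri ε R) :
    HasLowerBandwidth interleave 0 R := by
  obtain ⟨R₁, R₂, rfl, h₁, h₂⟩ := hR
  rintro (i | i) (j | j) h <;> simp only [interleave, Sum.elim_inl, Sum.elim_inr] at h
  · exact h₁ i j (by omega)
  · exact h₂ i j (by omega)
  · simp [mconj, h₂ i j (by omega)]
  · simp [mconj, h₁ i j (by omega)]

/-- The matrix `diag(N, −N)`, with `N` the nilpotent lower shift: multiplication of a Krylov matrix
by it advances every column by one step, with the sign of `H·Π = −Π·conj(H)` in the right half. -/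
def krylovShift (m : ℕ) : Matrix (Fin m ⊕ Fin m) (Fin m ⊕ Fin m) ℂ :=
  let N : Matrix (Fin m) (Fin m) ℂ := of fun i j => if (i : ℕ) = j + 1 then 1 else 0
  fromBlocks N 0 0 (-N)

lemma krylovShift_hasLowerBandwidth (m : ℕ) : HasLowerBandwidth interleave 2 (krylovShift m) := by
  rintro (i | i) (j | j) h <;> simp only [interleave, Sum.elim_inl, Sum.elim_inr] at h <;>
    simp [krylovShift] <;> omega

lemma krylovShift_inl_succ_inl_castSucc {k : ℕ} (j : Fin k) :
    krylovShift (k + 1) (.inl j.succ) (.inl j.castSucc) = 1 := by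
  simp [krylovShift]

lemma mul_krylovShift_apply_inl {ι : Type*} {k : ℕ}
    (X : Matrix ι (Fin (k + 1) ⊕ Fin (k + 1)) ℂ) (i : ι) (j : Fin k) :
    (X * krylovShift (k + 1)) i (.inl j.castSucc) = X i (.inl j.succ) := by
  have hsucc (l : Fin (k + 1)) : (l : ℕ) = j + 1 ↔ l = j.succ := by simp [Fin.ext_iff]
  simp [krylovShift, mul_apply, hsucc]

lemma mul_krylovShift_apply_inr {ι : Type*} {k : ℕ}
    (X : Matrix ι (Fin (k + 1) ⊕ Fin (k + 1)) ℂ) (i : ι) (j : Fin k) :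
    (X * krylovShift (k + 1)) i (.inr j.castSucc) = -X i (.inr j.succ) := by
  have hsucc (l : Fin (k + 1)) : (l : ℕ) = j + 1 ↔ l = j.succ := by simp [Fin.ext_iff]
  simp [krylovShift, mul_apply, hsucc]

lemma mul_krylovMat_submatrix {n k : ℕ} {H : Matrix (Fin n ⊕ Fin n) (Fin n ⊕ Fin n) ℂ}
    (hH : IsPiMat (-1) H) (q : Fin n ⊕ Fin n → ℂ) :
    (H * KrylovMat H q (k + 1)).submatrix id (Sum.map Fin.castSucc Fin.castSucc) =
      (KrylovMat H q (k + 1) * krylovShift (k + 1)).submatrix id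
        (Sum.map Fin.castSucc Fin.castSucc) := by
  have hleft (l : ℕ) : H *ᵥ ((H ^ l) *ᵥ q) = (H ^ (l + 1)) *ᵥ q := by
    rw [mulVec_mulVec, pow_succ']
  have hright (l : ℕ) : H *ᵥ (PiMat n *ᵥ ((mconj H ^ l) *ᵥ star q)) =
      -(PiMat n *ᵥ ((mconj H ^ (l + 1)) *ᵥ star q)) := by
    have hHPi : H * PiMat n = -(PiMat n * mconj H) := by simpa [IsPiMat] using hH
    rw [mulVec_mulVec, hHPi, neg_mulVec, ← mulVec_mulVec, mulVec_mulVec _ (mconj H), ← pow_succ']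
  ext i (j | j)
  · exact (congrFun (hleft j) i).trans (mul_krylovShift_apply_inl (KrylovMat H q (k + 1)) i j).symm
  · exact (congrFun (hright j) i).trans (mul_krylovShift_apply_inr (KrylovMat H q (k + 1)) i j).symm

/-- `X` has the zero pattern of the first `2k` columns of the coefficient matrix of a Π-Krylov
process: column `j` of `H·Q` involves only `q₁, …, q_{j+2}` and `Π·conj(q₁), …, Π·conj(q_{j+1})`,
with nonzero coefficient at `q_{j+2}` (columns `j` counted from `0`). -/
structure IsUnreducedPiHessenberg {k : ℕ}
    (X : Matrix (Fin (k + 1) ⊕ Fin (k + 1)) (Fin k ⊕ Fin k) ℂ) : Prop where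
  inl_eq_zero : ∀ (i : Fin (k + 1)) (j : Fin k), (j : ℕ) + 1 < i → X (.inl i) (.inl j) = 0
  inr_eq_zero : ∀ (i : Fin (k + 1)) (j : Fin k), (j : ℕ) < i → X (.inr i) (.inl j) = 0
  succ_ne_zero : ∀ j : Fin k, X (.inl j.succ) (.inl j) ≠ 0

variable {n k : ℕ} {ε : ℂ} {H : Matrix (Fin n ⊕ Fin n) (Fin n ⊕ Fin n) ℂ} {q : Fin n ⊕ Fin n → ℂ}
  {Q : Matrix (Fin n ⊕ Fin n) (Fin (k + 1) ⊕ Fin (k + 1)) ℂ}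
  {R : Matrix (Fin (k + 1) ⊕ Fin (k + 1)) (Fin (k + 1) ⊕ Fin (k + 1)) ℂ}

lemma isUnreducedPiHessenberg_conj_krylovShift (hR : IsPiUpperTri ε R) (hRu : IsUnit R) :
    IsUnreducedPiHessenberg ((R * krylovShift (k + 1) * R⁻¹).submatrix id
      (Sum.map Fin.castSucc Fin.castSucc)) := by
  have hS := krylovShift_hasLowerBandwidth (k + 1)
  have hband := hS.conj_upperTriangular hR.hasLowerBandwidth hRu
  refine ⟨fun i j hij => hband ?_, fun i j hij => hband ?_, fun j => ?_⟩
  · simp only [interleave, Sum.map_inl, Sum.elim_inl, Fin.val_castSucc, id_eq]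
    omega
  · simp only [interleave, Sum.map_inl, Sum.elim_inl, Sum.elim_inr, Fin.val_castSucc, id_eq]
    omega
  · refine hS.conj_upperTriangular_apply_ne_zero interleave_injective hR.hasLowerBandwidth hRu
      ?_ ?_
    · simp only [interleave, Sum.map_inl, Sum.elim_inl, Fin.val_castSucc, Fin.val_succ, id_eq]
      omega
    · exact (krylovShift_inl_succ_inl_castSucc j).trans_ne one_ne_zero

lemma mul_submatrix_eq_of_krylovMat_eq_mul (hH : IsPiMat (-1) H)
    (hK : KrylovMat H q (k + 1) = Q * R) (hR : IsPiUpperTri ε R) (hRu : IsUnit R) :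
    H * Q.submatrix id (Sum.map Fin.castSucc Fin.castSucc) =
      Q * (R * krylovShift (k + 1) * R⁻¹).submatrix id (Sum.map Fin.castSucc Fin.castSucc) := by
  refine hR.hasLowerBandwidth.mul_submatrix_eq_mul_conj_submatrix hRu
    mem_range_of_interleave_le ?_
  rw [← hK]
  exact mul_krylovMat_submatrix hH q

end Krylov

section GammaLan

lemma isTridiagonal_of_eq_zero_comm {k : ℕ} {T : Matrix (Fin k) (Fin k) ℂ}
    (hcomm : ∀ i j, T i j = 0 ↔ T j i = 0)
    (hlow : ∀ i j : Fin k, (j : ℕ) + 1 < i → T i j = 0) : IsTridiagonal T := by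
  rintro i j (h | h)
  · exact (hcomm i j).2 (hlow j i h)
  · exact hlow i j h

lemma isDiag_of_eq_zero_comm {m F : Type*} [LinearOrder m] [Zero F] {T : Matrix m m F}
    (hcomm : ∀ i j, T i j = 0 ↔ T j i = 0) (hlow : ∀ i j, j < i → T i j = 0) : T.IsDiag := by
  intro i j hij
  rcases lt_or_gt_of_ne hij with h | h
  · exact (hcomm i j).2 (hlow j i h)
  · exact hlow i j h

lemma submatrix_eq_fromBlocks_of_isPiMat {m l : ℕ} {W : Matrix (Fin m ⊕ Fin m) (Fin m ⊕ Fin m) ℂ}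
    (hW : IsPiMat (-1) W) (e : Fin l → Fin m) :
    W.submatrix (Sum.map e e) (Sum.map e e) =
      fromBlocks (W.toBlocks₁₁.submatrix e e) (-(mconj (W.toBlocks₂₁.submatrix e e)))
        (W.toBlocks₂₁.submatrix e e) (-(mconj (W.toBlocks₁₁.submatrix e e))) := by
  rw [isPiMat_iff] at hW
  ext (i | i) (j | j)
  · rfl
  · simpa [mconj, toBlocks₂₁] using hW (.inr (e i)) (.inl (e j))
  · rfl
  · simpa [mconj, toBlocks₁₁] using hW (.inl (e i)) (.inl (e j))

lemma submatrix_eq_gammaLanForm {k : ℕ}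
    {W : Matrix (Fin (k + 1) ⊕ Fin (k + 1)) (Fin (k + 1) ⊕ Fin (k + 1)) ℂ} (hW : IsPiMat (-1) W)
    (hX : IsUnreducedPiHessenberg (W.submatrix id (Sum.map Fin.castSucc Fin.castSucc))) {j₀ : Fin k}
    (hj₀ : (j₀ : ℕ) + 1 = k) :
    W.submatrix id (Sum.map Fin.castSucc Fin.castSucc) =
      gammaLanForm k (W.toBlocks₁₁.submatrix Fin.castSucc Fin.castSucc)
        (W.toBlocks₂₁.submatrix Fin.castSucc Fin.castSucc)
        (W (.inl (Fin.last k)) (.inl j₀.castSucc)) := by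
  have hinl (j : Fin k) : W (.inl (Fin.last k)) (.inl j.castSucc) =
      if (j : ℕ) + 1 = k then W (.inl (Fin.last k)) (.inl j₀.castSucc) else 0 := by
    split_ifs with hj
    · rw [show j = j₀ from Fin.ext (by omega)]
    · exact hX.inl_eq_zero (Fin.last k) j (by rw [Fin.val_last]; omega)
  have hinr (j : Fin k) : W (.inr (Fin.last k)) (.inl j.castSucc) = 0 :=
    hX.inr_eq_zero (Fin.last k) j j.isLt
  have hswap := isPiMat_iff.1 hW
  ext (i | i) (j | j) <;> refine Fin.lastCases ?_ (fun i => ?_) i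
  · simpa [gammaLanForm] using hinl j
  · simp [gammaLanForm, toBlocks₁₁]
  · simpa [gammaLanForm, hinr] using hswap (.inr (Fin.last k)) (.inl j.castSucc)
  · simpa [gammaLanForm, toBlocks₂₁] using hswap (.inr i.castSucc) (.inl j.castSucc)
  · simpa [gammaLanForm] using hinr j
  · simp [gammaLanForm, toBlocks₂₁]
  · have hcorner := hswap (.inl (Fin.last k)) (.inl j.castSucc)
    rw [hinl j] at hcorner
    simpa [gammaLanForm, apply_ite] using hcorner
  · simpa [gammaLanForm, toBlocks₁₁] using hswap (.inl i.castSucc) (.inl j.castSucc)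

end GammaLan

/-- existence of the ΓLan decomposition H·Q_{2k} = Q_{2k+2}·T̃_{2k} from
the skinny ΓQR factorization of the Π-Krylov matrix. -/
theorem stmt13 (n k : ℕ) (hk : 1 ≤ k) (hn : k + 1 ≤ n)
    (A B : Matrix (Fin n) (Fin n) ℂ) (hA : Aᴴ = A) (hB : Bᵀ = B)
    (q₁ : (Fin n ⊕ Fin n) → ℂ)
    (hrank : (KrylovMat (BSmat A B) q₁ (k + 1)).rank = 2 * (k + 1))
    (hminor : ∀ (i : ℕ) (h : i ≤ k + 1), 1 ≤ i →
      piLeadingMinor ((KrylovMat (BSmat A B) q₁ (k + 1))ᴴ * GammaZero n *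
        KrylovMat (BSmat A B) q₁ (k + 1)) i h ≠ 0)
    (Q : Matrix (Fin n ⊕ Fin n) (Fin (k + 1) ⊕ Fin (k + 1)) ℂ)
    (R : Matrix (Fin (k + 1) ⊕ Fin (k + 1)) (Fin (k + 1) ⊕ Fin (k + 1)) ℂ)
    (hQR : IsSkinnyGammaQR (GammaZero n) (KrylovMat (BSmat A B) q₁ (k + 1)) Q R)
    (δ : Fin (k + 1) → ℂ) (hδ : ∀ j, δ j = 1 ∨ δ j = -1)
    (hGam : Qᴴ * GammaZero n * Q =
      Matrix.fromBlocks (Matrix.diagonal δ) 0 0 (-(Matrix.diagonal δ))) :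
    ∃ (T11 T21 : Matrix (Fin k) (Fin k) ℂ) (t : ℂ),
      IsTridiagonal T11 ∧
      (∀ (i : Fin k) (h : (i : ℕ) + 1 < k),
        T11 ⟨(i : ℕ) + 1, h⟩ i ≠ 0 ∧ T11 i ⟨(i : ℕ) + 1, h⟩ ≠ 0) ∧
      T21.IsDiag ∧
      (BSmat A B * Q.submatrix id (Sum.map Fin.castSucc Fin.castSucc) =
        Q * gammaLanForm k T11 T21 t) ∧
      ((Q.submatrix id (Sum.map Fin.castSucc Fin.castSucc))ᴴ * GammaZero n *
          BSmat A B * Q.submatrix id (Sum.map Fin.castSucc Fin.castSucc) =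
        Matrix.fromBlocks (Matrix.diagonal (δ ∘ Fin.castSucc)) 0 0
            (-(Matrix.diagonal (δ ∘ Fin.castSucc))) *
          Matrix.fromBlocks T11 (-(mconj T21)) T21 (-(mconj T11))) ∧
      ((Matrix.diagonal (δ ∘ Fin.castSucc) * T11)ᴴ =
        Matrix.diagonal (δ ∘ Fin.castSucc) * T11) := by
  obtain ⟨hK, hQ, -, hR⟩ := hQR
  have hRu : IsUnit R := isUnit_of_card_le_rank_mul (Q := Q) (by
    rw [← hK, hrank, Fintype.card_sum, Fintype.card_fin]
    omega)
  have hδ₂ : δ * δ = 1 := funext fun j => by rcases hδ j with h | h <;> simp [h]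
  have hδs : star δ = δ := funext fun j => by rcases hδ j with h | h <;> simp [h]
  have hH : IsPiMat (-1) (BSmat A B) := isPiMat_BSmat A B
  have hΓH : (GammaZero n * BSmat A B).IsHermitian := isHermitian_gammaZero_mul_BSmat hA hB
  have hHQ := mul_submatrix_eq_of_krylovMat_eq_mul hH hK hR hRu
  set W := gammaCompression δ (BSmat A B) Q
  have hWC := gammaCompression_submatrix_eq hδ₂ hGam hHQ
  have hX := hWC ▸ isUnreducedPiHessenberg_conj_krylovShift hR hRu
  have hW : IsPiMat (-1) W := isPiMat_gammaCompression hδs hH hQ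
  have hcomm := gammaCompression_apply_eq_zero_comm (Q := Q) hδ₂ hΓH
  refine ⟨W.toBlocks₁₁.submatrix Fin.castSucc Fin.castSucc,
    W.toBlocks₂₁.submatrix Fin.castSucc Fin.castSucc,
    W (.inl (Fin.last k)) (.inl (Fin.castSucc ⟨k - 1, by omega⟩)),
    isTridiagonal_of_eq_zero_comm (fun _ _ => hcomm _ _) fun i j => hX.inl_eq_zero i.castSucc j,
    fun i h => ⟨hX.succ_ne_zero i, fun h₀ => hX.succ_ne_zero i ((hcomm _ _).1 h₀)⟩,
    isDiag_of_eq_zero_comm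
      (fun _ _ => gammaCompression_inr_inl_eq_zero_comm hδ₂ hδs hH hΓH hQ _ _)
      fun i j => hX.inr_eq_zero i.castSucc j, ?_, ?_,
    isHermitian_diagonal_mul_toBlocks₁₁_gammaCompression hδ₂ hΓH Fin.castSucc⟩
  · rw [hHQ, ← hWC]
    exact congrArg (Q * ·) (submatrix_eq_gammaLanForm hW hX (Nat.sub_add_cancel hk))
  · rw [conjTranspose_submatrix_mul_gammaZero_mul hδ₂, submatrix_eq_fromBlocks_of_isPiMat hW]
    rfl

end
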